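/- Let μ be a finite Borel measure on ℝ and define p(x, t) = ∫_ℝ (2π(1 − e^{−t}))^{−1/2} exp(−(x − y e^{−t/2})²/(2(1 − e^{−t}))) dμ(y) for t > 0 and x ∈ ℝ. Then p is smooth on ℝ × (0, ∞) and satisfies the Fokker–Planck equation ∂_t p(x, t) = (1/2) ∂_x ( x · p(x, t) ) + (1/2) ∂²_x p(x, t) for all x ∈ ℝ and t > 0. -/

import Mathlib

open MeasureTheory Real

noncomputable section

/-- The marginal density at time `t` of the OU process started from `μ`. -/
def pMarg (μ : Measure ℝ) (x t : ℝ) : ℝ :=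
  ∫ y, (2 * π * (1 - Real.exp (-t))) ^ (-(1:ℝ)/2) *
    Real.exp (-(x - y * Real.exp (-t / 2)) ^ 2 / (2 * (1 - Real.exp (-t)))) ∂μ

/-- Integrand of the tilted moments. -/
def ouInt (k : ℕ) (q : ℝ × ℝ) (y : ℝ) : ℝ := y ^ k * Real.exp (q.1 * y - q.2 * y ^ 2)

/-- Tilted moments of `μ`. -/
def ouG (μ : Measure ℝ) (k : ℕ) (q : ℝ × ℝ) : ℝ := ∫ y, ouInt k q y ∂μ

lemma ouInt_bound (k : ℕ) (M d : ℝ) (hd : 0 < d) : ∃ C : ℝ, ∀ q : ℝ × ℝ, |q.1| ≤ M → d ≤ q.2 →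
    ∀ y, |ouInt k q y| ≤ C := by
  refine ⟨k.factorial * Real.exp ((M + 1) ^ 2 / (4 * d)), fun q h1 h2 y => ?_⟩
  have h3 : |y| ^ k ≤ k.factorial * Real.exp |y| := by
    have := Real.pow_div_factorial_le_exp |y| (abs_nonneg y) k
    rw [div_le_iff₀ (by positivity)] at this
    linarith
  have h4 : q.1 * y ≤ M * |y| :=
    (le_abs_self _).trans (by rw [abs_mul]; gcongr)
  have h5 : d * y ^ 2 ≤ q.2 * y ^ 2 := by gcongr
  have h6 : |y| + (q.1 * y - q.2 * y ^ 2) ≤ (M + 1) ^ 2 / (4 * d) := by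
    rw [le_div_iff₀ (by positivity)]
    have h7 : |y| + (q.1 * y - q.2 * y ^ 2) ≤ (M + 1) * |y| - d * |y| ^ 2 := by
      rw [sq_abs]; linarith
    have h8 := mul_le_mul_of_nonneg_right h7 (by positivity : 0 ≤ 4 * d)
    nlinarith [sq_nonneg (M + 1 - 2 * d * |y|)]
  unfold ouInt
  rw [abs_mul, abs_pow, Real.abs_exp]
  calc |y| ^ k * Real.exp (q.1 * y - q.2 * y ^ 2)
      ≤ (k.factorial * Real.exp |y|) * Real.exp (q.1 * y - q.2 * y ^ 2) := by gcongr
    _ = k.factorial * Real.exp (|y| + (q.1 * y - q.2 * y ^ 2)) := by rw [Real.exp_add]; ring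
    _ ≤ _ := by gcongr

lemma ouInt_cont (k : ℕ) (q : ℝ × ℝ) : Continuous (ouInt k q) := by
  unfold ouInt; fun_prop

lemma ouInt_integrable (μ : Measure ℝ) [IsFiniteMeasure μ] (k : ℕ) (q : ℝ × ℝ) (hq : 0 < q.2) :
    Integrable (ouInt k q) μ := by
  obtain ⟨C, hC⟩ := ouInt_bound k |q.1| q.2 hq
  exact Integrable.of_bound (ouInt_cont k q).aestronglyMeasurable C
    (Filter.Eventually.of_forall fun y => hC q le_rfl le_rfl y)

lemma ouInt_hasFDerivAt (k : ℕ) (q : ℝ × ℝ) (y : ℝ) :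
    HasFDerivAt (fun q => ouInt k q y)
      (ouInt (k + 1) q y • ContinuousLinearMap.fst ℝ ℝ ℝ
        - ouInt (k + 2) q y • ContinuousLinearMap.snd ℝ ℝ ℝ) q := by
  unfold ouInt
  have h1 : HasFDerivAt (fun q : ℝ × ℝ => q.1) (ContinuousLinearMap.fst ℝ ℝ ℝ) q := hasFDerivAt_fst
  have h2 : HasFDerivAt (fun q : ℝ × ℝ => q.2) (ContinuousLinearMap.snd ℝ ℝ ℝ) q := hasFDerivAt_snd
  have := (((h1.mul_const y).sub (h2.mul_const (y ^ 2))).exp).const_mul (y ^ k)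
  refine this.congr_fderiv ?_
  ext <;> simp <;> ring_nf

lemma ouG_hasFDerivAt (μ : Measure ℝ) [IsFiniteMeasure μ] (k : ℕ) (q : ℝ × ℝ) (hq : 0 < q.2) :
    HasFDerivAt (ouG μ k)
      (ouG μ (k + 1) q • ContinuousLinearMap.fst ℝ ℝ ℝ
        - ouG μ (k + 2) q • ContinuousLinearMap.snd ℝ ℝ ℝ) q := by
  obtain ⟨C1, hC1⟩ := ouInt_bound (k + 1) (|q.1| + 1) (q.2 / 2) (by positivity)
  obtain ⟨C2, hC2⟩ := ouInt_bound (k + 2) (|q.1| + 1) (q.2 / 2) (by positivity)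
  have hs : {p : ℝ × ℝ | |p.1| < |q.1| + 1 ∧ q.2 / 2 < p.2} ∈ nhds q := by
    apply IsOpen.mem_nhds
    · exact (isOpen_lt (f := fun p : ℝ × ℝ => |p.1|) (g := fun _ => |q.1| + 1)
        (by fun_prop) (by fun_prop)).inter
        (isOpen_lt (f := fun _ : ℝ × ℝ => q.2 / 2) (g := fun p => p.2) (by fun_prop) (by fun_prop))
    · constructor
      · linarith
      · linarith
  have i1 := (ouInt_integrable μ (k + 1) q hq)
  have i2 := (ouInt_integrable μ (k + 2) q hq)
  have key := hasFDerivAt_integral_of_dominated_of_fderiv_le (𝕜 := ℝ) (μ := μ)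
    (F := fun p y => ouInt k p y) (x₀ := q)
    (F' := fun p y => ouInt (k + 1) p y • ContinuousLinearMap.fst ℝ ℝ ℝ
        - ouInt (k + 2) p y • ContinuousLinearMap.snd ℝ ℝ ℝ)
    (bound := fun _ => C1 + C2) hs
    (Filter.Eventually.of_forall fun p => (ouInt_cont k p).aestronglyMeasurable)
    (ouInt_integrable μ k q hq)
    ((i1.smul_const _).sub (i2.smul_const _)).aestronglyMeasurable
    (Filter.Eventually.of_forall fun y p hp => by
      refine (norm_sub_le _ _).trans ?_
      rw [norm_smul, norm_smul]
      have a1 := hC1 p hp.1.le hp.2.le y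
      have a2 := hC2 p hp.1.le hp.2.le y
      have b1 := ContinuousLinearMap.norm_fst_le ℝ ℝ ℝ
      have b2 := ContinuousLinearMap.norm_snd_le ℝ ℝ ℝ
      rw [Real.norm_eq_abs, Real.norm_eq_abs]
      have c1 := mul_le_mul a1 b1 (norm_nonneg _) ((abs_nonneg _).trans a1)
      have c2 := mul_le_mul a2 b2 (norm_nonneg _) ((abs_nonneg _).trans a2)
      linarith)
    (integrable_const _)
    (Filter.Eventually.of_forall fun y p _ => ouInt_hasFDerivAt k p y)
  rw [integral_sub (i1.smul_const _) (i2.smul_const _), integral_smul_const,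
    integral_smul_const] at key
  exact key

lemma ouG_contDiffOn (μ : Measure ℝ) [IsFiniteMeasure μ] (n : ℕ) : ∀ k : ℕ,
    ContDiffOn ℝ n (ouG μ k) {q : ℝ × ℝ | 0 < q.2} := by
  have ho : IsOpen {q : ℝ × ℝ | 0 < q.2} := isOpen_lt (by fun_prop) (by fun_prop)
  induction n with
  | zero =>
    intro k
    rw [Nat.cast_zero, contDiffOn_zero]
    exact fun q hq => (ouG_hasFDerivAt μ k q hq).continuousAt.continuousWithinAt
  | succ n ih =>
    intro k
    rw [Nat.cast_add, Nat.cast_one, contDiffOn_succ_iff_fderiv_of_isOpen ho]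
    refine ⟨fun q hq => (ouG_hasFDerivAt μ k q hq).differentiableAt.differentiableWithinAt,
      by simp, ?_⟩
    have : ContDiffOn ℝ n (fun q => ouG μ (k + 1) q • ContinuousLinearMap.fst ℝ ℝ ℝ
        - ouG μ (k + 2) q • ContinuousLinearMap.snd ℝ ℝ ℝ) {q : ℝ × ℝ | 0 < q.2} :=
      ((ih (k + 1)).smul contDiffOn_const).sub ((ih (k + 2)).smul contDiffOn_const)
    exact this.congr fun q hq => (ouG_hasFDerivAt μ k q hq).fderiv

lemma pMarg_eq (μ : Measure ℝ) (x t : ℝ) (ht : 0 < t) :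
    pMarg μ x t = (2 * π * (1 - Real.exp (-t))) ^ (-(1:ℝ)/2) *
      (Real.exp (-x ^ 2 / (2 * (1 - Real.exp (-t)))) *
      ouG μ 0 (Real.exp (-t / 2) * x / (1 - Real.exp (-t)),
        Real.exp (-t) / (2 * (1 - Real.exp (-t))))) := by
  have hσ : 0 < 1 - Real.exp (-t) := by
    have : Real.exp (-t) < 1 := by simpa using ht
    linarith
  have ha : Real.exp (-t) = Real.exp (-t / 2) ^ 2 := by
    rw [← Real.exp_nat_mul]; congr 1; push_cast; ring
  unfold pMarg ouG ouInt
  rw [integral_const_mul, ← integral_const_mul (Real.exp (-x ^ 2 / (2 * (1 - Real.exp (-t)))))]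
  congr 2
  ext y
  rw [pow_zero, one_mul, ← Real.exp_add]
  congr 1
  field_simp
  rw [ha]
  ring

lemma sig_pos {t : ℝ} (ht : 0 < t) : 0 < 1 - Real.exp (-t) := by
  have : Real.exp (-t) < 1 := by simpa using ht
  linarith

lemma pMarg_smooth (μ : Measure ℝ) [IsFiniteMeasure μ] :
    ContDiffOn ℝ (⊤ : ℕ∞) (fun q : ℝ × ℝ => pMarg μ q.1 q.2) (Set.univ ×ˢ Set.Ioi 0) := by
  rw [contDiffOn_infty]
  intro n
  have : ContDiffOn ℝ n (fun q : ℝ × ℝ => (2 * π * (1 - Real.exp (-q.2))) ^ (-(1:ℝ)/2) *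
      (Real.exp (-q.1 ^ 2 / (2 * (1 - Real.exp (-q.2)))) *
      ouG μ 0 (Real.exp (-q.2 / 2) * q.1 / (1 - Real.exp (-q.2)),
        Real.exp (-q.2) / (2 * (1 - Real.exp (-q.2)))))) (Set.univ ×ˢ Set.Ioi 0) := by
    have hne : ∀ q ∈ (Set.univ ×ˢ Set.Ioi 0 : Set (ℝ × ℝ)), 0 < 1 - Real.exp (-q.2) :=
      fun q hq => sig_pos hq.2
    have hσ : ContDiffOn ℝ n (fun q : ℝ × ℝ => 1 - Real.exp (-q.2)) (Set.univ ×ˢ Set.Ioi 0) := by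
      fun_prop
    refine ContDiffOn.mul ?_ (ContDiffOn.mul ?_ ?_)
    · refine ContDiffOn.rpow_const_of_ne (contDiffOn_const.mul hσ) fun q hq => ?_
      have := hne q hq
      positivity
    · refine ContDiffOn.exp (ContDiffOn.div (by fun_prop) (contDiffOn_const.mul hσ) fun q hq => ?_)
      have := hne q hq
      positivity
    · refine (ouG_contDiffOn μ n 0).comp (f := fun q : ℝ × ℝ =>
        (Real.exp (-q.2 / 2) * q.1 / (1 - Real.exp (-q.2)),
        Real.exp (-q.2) / (2 * (1 - Real.exp (-q.2))))) (ContDiffOn.prodMk ?_ ?_) ?_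
      · exact ContDiffOn.div (by fun_prop) hσ fun q hq => (hne q hq).ne'
      · refine ContDiffOn.div (by fun_prop) (contDiffOn_const.mul hσ) fun q hq => ?_
        have := hne q hq
        positivity
      · intro q hq
        have := hne q hq
        show 0 < Real.exp (-q.2) / (2 * (1 - Real.exp (-q.2)))
        positivity
  exact this.congr fun q hq => pMarg_eq μ q.1 q.2 hq.2

lemma ouG_curve (μ : Measure ℝ) [IsFiniteMeasure μ] (k : ℕ) {b c : ℝ → ℝ} {b' c' s : ℝ}
    (hb : HasDerivAt b b' s) (hc : HasDerivAt c c' s) (h : 0 < c s) :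
    HasDerivAt (fun s => ouG μ k (b s, c s))
      (ouG μ (k + 1) (b s, c s) * b' - ouG μ (k + 2) (b s, c s) * c') s := by
  have := (ouG_hasFDerivAt μ k (b s, c s) h).comp_hasDerivAt s (hb.prodMk hc)
  exact this.congr_deriv (by simp)

/-- The Fokker-Planck equation. -/
lemma pMarg_pde (μ : Measure ℝ) [IsFiniteMeasure μ] (x t : ℝ) (ht : 0 < t) :
      deriv (fun s => pMarg μ x s) t =
        (1 / 2) * deriv (fun x' => x' * pMarg μ x' t) x +
          (1 / 2) * deriv (deriv (fun x' => pMarg μ x' t)) x := by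
  have hσ := sig_pos ht
  have ha : Real.exp (-t) = Real.exp (-t / 2) ^ 2 := by
    rw [← Real.exp_nat_mul]; congr 1; push_cast; ring
  have hc0 : 0 < Real.exp (-t) / (2 * (1 - Real.exp (-t))) := by positivity
  -- x derivatives
  have hG : ∀ k z, HasDerivAt (fun z => ouG μ k (Real.exp (-t / 2) * z / (1 - Real.exp (-t)),
        Real.exp (-t) / (2 * (1 - Real.exp (-t)))))
      (ouG μ (k + 1) (Real.exp (-t / 2) * z / (1 - Real.exp (-t)),
        Real.exp (-t) / (2 * (1 - Real.exp (-t)))) * (Real.exp (-t / 2) / (1 - Real.exp (-t)))) z := by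
    intro k z
    have := ouG_curve μ k (b := fun z => Real.exp (-t / 2) * z / (1 - Real.exp (-t)))
      (c := fun _ => Real.exp (-t) / (2 * (1 - Real.exp (-t))))
      (((hasDerivAt_id z).const_mul (Real.exp (-t / 2))).div_const (1 - Real.exp (-t)))
      (hasDerivAt_const z _) hc0
    simpa using this
  have hE : ∀ z, HasDerivAt (fun z => Real.exp (-z ^ 2 / (2 * (1 - Real.exp (-t)))))
      (Real.exp (-z ^ 2 / (2 * (1 - Real.exp (-t)))) * (-z / (1 - Real.exp (-t)))) z := by
    intro z
    refine ((((hasDerivAt_id z).pow 2).neg.div_const (2 * (1 - Real.exp (-t)))).exp).congr_deriv ?_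
    simp
    field_simp
  have hp1 : ∀ z, HasDerivAt (fun z => pMarg μ z t) _ z := fun z =>
    (((hE z).mul (hG 0 z)).const_mul ((2 * π * (1 - Real.exp (-t))) ^ (-(1:ℝ)/2))).congr_of_eventuallyEq
      (Filter.Eventually.of_forall fun w => pMarg_eq μ w t ht)
  have hd1 := funext fun z => (hp1 z).deriv
  have hlin : HasDerivAt (fun z => -z / (1 - Real.exp (-t))) (-1 / (1 - Real.exp (-t))) x :=
    (hasDerivAt_id x).neg.div_const _
  have hp2 := ((((hE x).mul hlin).mul (hG 0 x)).add ((hE x).mul ((hG 1 x).mul_const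
    (Real.exp (-t / 2) / (1 - Real.exp (-t)))))).const_mul
      ((2 * π * (1 - Real.exp (-t))) ^ (-(1:ℝ)/2))
  have hd2 := (congrArg (fun f => deriv f x) hd1).trans hp2.deriv
  beta_reduce at hd2
  have hxp : deriv (fun x' => x' * pMarg μ x' t) x = _ := ((hasDerivAt_id' x).mul (hp1 x)).deriv
  -- t derivative
  have he1 : HasDerivAt (fun s : ℝ => Real.exp (-s)) (-Real.exp (-t)) t := by
    refine ((hasDerivAt_id t).neg.exp).congr_deriv ?_
    simp
  have he2 : HasDerivAt (fun s : ℝ => Real.exp (-s / 2)) (-Real.exp (-t / 2) / 2) t := by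
    refine (((hasDerivAt_id t).neg.div_const 2).exp).congr_deriv ?_
    simp; ring
  have hs : HasDerivAt (fun s : ℝ => 1 - Real.exp (-s)) (Real.exp (-t)) t := by
    simpa using he1.const_sub 1
  have hA : HasDerivAt (fun s : ℝ => (2 * π * (1 - Real.exp (-s))) ^ (-(1:ℝ)/2))
      ((2 * π * (1 - Real.exp (-t))) ^ (-(1:ℝ)/2) * (-(Real.exp (-t)) / (2 * (1 - Real.exp (-t))))) t := by
    refine ((hs.const_mul (2 * π)).rpow_const (p := -(1:ℝ)/2) (Or.inl (by positivity))).congr_deriv ?_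
    rw [Real.rpow_sub_one (by positivity)]
    field_simp
  have hB := (he2.mul_const x).div hs hσ.ne'
  have hC := he1.div (hs.const_mul 2) (by positivity)
  have hGt := ouG_curve μ 0 hB hC hc0
  have hEt := ((hasDerivAt_const t (-x ^ 2)).div (hs.const_mul 2) (by positivity)).exp
  have hpt := (hA.mul (hEt.mul hGt)).congr_of_eventuallyEq (f₁ := fun s => pMarg μ x s) (by
    filter_upwards [lt_mem_nhds ht] with s hs
    exact pMarg_eq μ x s hs)
  rw [hpt.deriv, hd2, hxp, pMarg_eq μ x t ht]
  clear hpt hd2 hxp hEt hGt hC hB hA hs he2 he1 hp2 hlin hd1 hp1 hE hG hc0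
  simp only [Pi.mul_apply, Pi.div_apply, zero_add, Nat.reduceAdd]
  generalize (2 * π * (1 - Real.exp (-t))) ^ (-(1:ℝ)/2) = A
  generalize Real.exp (-x ^ 2 / (2 * (1 - Real.exp (-t)))) = E
  generalize ouG μ 0 _ = G0
  generalize ouG μ 1 _ = G1
  generalize ouG μ 2 _ = G2
  rw [ha] at hσ ⊢
  generalize Real.exp (-t / 2) = a at hσ ⊢
  field_simp
  ring

/-- The OU marginal density is smooth on `ℝ × (0,∞)` and satisfies the Fokker–Planck
equation `∂ₜ p = (1/2) ∂ₓ(x p) + (1/2) ∂ₓ² p`. -/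
theorem pMarg_fokker_planck (μ : Measure ℝ) [IsFiniteMeasure μ] :
    ContDiffOn ℝ (⊤ : ℕ∞) (fun q : ℝ × ℝ => pMarg μ q.1 q.2) (Set.univ ×ˢ Set.Ioi 0) ∧
    ∀ x t : ℝ, 0 < t →
      deriv (fun s => pMarg μ x s) t =
        (1 / 2) * deriv (fun x' => x' * pMarg μ x' t) x +
          (1 / 2) * deriv (deriv (fun x' => pMarg μ x' t)) x :=
  ⟨pMarg_smooth μ, fun x t ht => pMarg_pde μ x t ht⟩
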